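/- Let p and q be distinct primes and let G be a group of order p²q. For every gamma function γ on G there exists a Sylow p-subgroup A of G which is invariant under γ(A). In particular, if p > 2, then the Sylow p-subgroups of G and of (G,∘) are isomorphic, where g ∘ h = g^{γ(h)}·h. -/

import Mathlib

/- Formalization of results from "Hopf-Galois structures on extensions of degree p²q and
skew braces of order p²q: the cyclic Sylow p-subgroup case" (Campedel, Caranti, Del Corso).

Conventions: the paper composes permutations/automorphisms left-to-right and writes
`x^α` for the action; in Mathlib composition is right-to-left, so the paper's product
`αβ` is rendered as `β * α`, the paper's `x^α` as `α x`, and the paper's conjugate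
`α^β = β⁻¹αβ` as `β * α * β⁻¹`. -/

namespace HGS

universe u v

variable {G : Type*} [Group G]

/-- A gamma function (GF) on `G`: a map `γ : G → Aut G` satisfying the gamma functional
equation `γ(g^{γ(h)}·h) = γ(g)γ(h)` (the right-hand side is the paper's product, which in
Mathlib's composition order reads `γ h * γ g`). -/
def IsGammaFunction (γ : G → MulAut G) : Prop :=
  ∀ g h : G, γ (γ h g * h) = γ h * γ g

/-- The circle operation `g ∘ h = g^{γ(h)} · h` associated to a gamma function. -/
def circ (γ : G → MulAut G) (g h : G) : G := γ h g * h

/-! Let `H = (G, ∘)`. The gamma function makes `H` act on `G` by automorphisms, and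
`c h = (h⁻¹)⁻¹` (inner inverse in `H`, outer one in `G`) is a bijective crossed homomorphism
`H → G`. A Sylow `p`-subgroup `P` of `H` fixes some Sylow `p`-subgroup `A` of `G`, because the
number of these is prime to `p`, and then, twisting the action on `G ⧸ A` by `c`, it fixes a coset
of `A`, because the index of `A` is prime to `p`. Conjugating `P` so that this coset becomes
trivial yields `c P ⊆ A`, hence `c P = A`.

If `p ^ 3 ∤ |G|`, then `A` is abelian and `h ∈ P` acts on it as an endomorphism `σ` with
`δ = σ - 1` nilpotent, so that `δ ^ 2 = 0`. For odd `p` the endomorphism `1 + σ + ⋯ + σ ^ (p - 1)`,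
which takes `c h` to `c (h ^ p)`, is then a unit times `p`, so `h ^ p = 1` if and only if
`c h ^ p = 1`. This determines the isomorphism type of a group of order dividing `p ^ 2`. -/

section Ring

variable {R : Type*} [Ring R]

theorem isNilpotent_sub_one_of_pow_prime_pow_eq_one {p n : ℕ} (hp : p.Prime)
    (hR : IsNilpotent (p : R)) {σ : R} (hσ : σ ^ p ^ n = 1) : IsNilpotent (σ - 1) := by
  obtain ⟨r, hr⟩ := (Commute.one_right (σ - 1)).exists_add_pow_prime_pow_eq hp n
  have hpow : (σ - 1) ^ p ^ n = p * -((σ - 1) * r) := by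
    rw [sub_add_cancel, hσ, one_pow, mul_one, mul_assoc, add_right_comm, right_eq_add] at hr
    rw [mul_neg, eq_neg_iff_add_eq_zero, hr]
  rw [← IsNilpotent.pow_iff_pos (pow_pos hp.pos n).ne', hpow]
  exact (Nat.cast_commute p _).isNilpotent_mul_right hR

theorem one_add_pow_of_sq_eq_zero {δ : R} (hδ : δ ^ 2 = 0) (n : ℕ) :
    (1 + δ) ^ n = 1 + n * δ := by
  induction n with
  | zero => simp
  | succ n ih =>
    rw [pow_succ, ih, add_mul, mul_add (n * δ), mul_assoc _ δ δ, ← pow_two, hδ]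
    push_cast
    noncomm_ring

theorem geom_sum_one_add_of_sq_eq_zero {δ : R} (hδ : δ ^ 2 = 0) (n : ℕ) :
    ∑ i ∈ Finset.range n, (1 + δ) ^ i = n + (n.choose 2 : ℕ) * δ := by
  simp only [one_add_pow_of_sq_eq_zero hδ, Finset.sum_add_distrib, ← Finset.sum_mul,
    Finset.sum_const, Finset.card_range, nsmul_one]
  rw [← Nat.cast_sum, Finset.sum_range_id, Nat.choose_two_right]

theorem exists_units_geom_sum_one_add_eq {δ : R} (hδ : δ ^ 2 = 0) {n : ℕ} (hn : Odd n) :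
    ∃ u : Rˣ, ∑ i ∈ Finset.range n, (1 + δ) ^ i = u * n := by
  obtain ⟨k, rfl⟩ := hn
  have hchoose : (2 * k + 1).choose 2 = k * (2 * k + 1) := by
    rw [Nat.choose_two_right, Nat.add_sub_cancel, mul_left_comm,
      Nat.mul_div_cancel_left _ two_pos, mul_comm]
  have hunit : IsUnit (1 + k * δ) :=
    ((Nat.cast_commute k δ).isNilpotent_mul_left ⟨2, hδ⟩).isUnit_one_add
  refine ⟨hunit.unit, ?_⟩
  rw [geom_sum_one_add_of_sq_eq_zero hδ, hchoose, hunit.unit_spec, add_mul, one_mul, mul_assoc,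
    ← (Nat.cast_commute (2 * k + 1) δ).eq, Nat.cast_mul, mul_assoc]

end Ring

section Module

variable {R M : Type*} [Ring R] [AddCommGroup M] [Module R M] {p : ℕ}

theorem eq_bot_of_map_eq_of_isNilpotent {f : Module.End R M} (hf : IsNilpotent f)
    {N : Submodule R M} (hN : N.map f = N) : N = ⊥ := by
  obtain ⟨n, hn⟩ := hf
  have hpow : ∀ m : ℕ, N.map (f ^ m) = N := by
    intro m
    induction m with
    | zero => exact Submodule.map_id N
    | succ m ih => rw [pow_succ, Module.End.mul_eq_comp, Submodule.map_comp, hN, ih]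
  rw [← hpow n, hn, Submodule.map_zero]

theorem le_ker_pow_of_isNilpotent (hp : p.Prime) {f : Module.End R M}
    (hf : IsNilpotent f) {k : ℕ} {N : Submodule R M} (hfN : N.map f ≤ N)
    (hN : Nat.card N ∣ p ^ k) : N ≤ LinearMap.ker (f ^ k) := by
  induction k generalizing N with
  | zero =>
    rw [pow_zero, Nat.dvd_one, Nat.card_eq_one_iff_unique] at hN
    have := hN.1
    exact N.eq_bot_of_subsingleton.trans_le bot_le
  | succ k ih =>
    have : Finite N :=
      Nat.finite_of_card_ne_zero (ne_zero_of_dvd_ne_zero (pow_pos hp.pos (k + 1)).ne' hN)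
    have hdvd : Nat.card (N.map f) ∣ p ^ k := by
      by_cases heq : N.map f = N
      · rw [heq, eq_bot_of_map_eq_of_isNilpotent hf heq]
        simp
      · have hlt : Nat.card (N.map f) < Nat.card N :=
          Set.ncard_lt_ncard (SetLike.coe_ssubset_coe.2 (lt_of_le_of_ne hfN heq))
            (Set.toFinite (N : Set M))
        obtain ⟨j, hj, hcardN⟩ := (Nat.dvd_prime_pow hp).1 hN
        have hdvdN : Nat.card (N.map f) ∣ Nat.card N :=
          AddSubgroup.card_dvd_of_le (Submodule.toAddSubgroup_mono hfN)
        obtain ⟨i, -, hcard⟩ := (Nat.dvd_prime_pow hp).1 (hcardN ▸ hdvdN)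
        rw [hcard, hcardN, Nat.pow_lt_pow_iff_right hp.one_lt] at hlt
        exact hcard ▸ pow_dvd_pow p (by omega)
    intro x hx
    rw [LinearMap.mem_ker, pow_succ, Module.End.mul_apply]
    exact ih (Submodule.map_mono hfN) hdvd (Submodule.mem_map_of_mem hx)

theorem pow_eq_zero_of_isNilpotent_of_card_dvd (hp : p.Prime) {f : Module.End R M}
    (hf : IsNilpotent f) {k : ℕ} (hM : Nat.card M ∣ p ^ k) : f ^ k = 0 := by
  rw [← LinearMap.ker_eq_top, eq_top_iff]
  exact le_ker_pow_of_isNilpotent hp hf le_top (by simpa using hM)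

theorem geom_sum_apply_eq_zero_iff (hp : p.Prime) (hodd : Odd p) (hM : Nat.card M ∣ p ^ 2)
    {σ : Module.End R M} {n : ℕ} (hσ : σ ^ p ^ n = 1) (x : M) :
    (∑ i ∈ Finset.range p, σ ^ i) x = 0 ↔ p • x = 0 := by
  have hnil : IsNilpotent (p : Module.End R M) := by
    refine ⟨2, LinearMap.ext fun y => ?_⟩
    rw [← Nat.cast_pow, Module.End.natCast_apply, LinearMap.zero_apply]
    obtain ⟨m, hm⟩ := hM
    rw [hm, mul_comm, mul_nsmul, card_nsmul_eq_zero']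
  have hsq : (σ - 1) ^ 2 = 0 := pow_eq_zero_of_isNilpotent_of_card_dvd hp
    (isNilpotent_sub_one_of_pow_prime_pow_eq_one hp hnil hσ) hM
  obtain ⟨u, hu⟩ := exists_units_geom_sum_one_add_eq hsq hodd
  rw [add_sub_cancel] at hu
  rw [hu, Module.End.mul_apply, Module.End.natCast_apply]
  exact map_eq_zero_iff _ ((Module.End.isUnit_iff _).1 u.isUnit).injective

end Module

theorem nonempty_linearEquiv_of_natCard_eq (K : Type*) {V W : Type*} [Field K] [Finite K]
    [AddCommGroup V] [AddCommGroup W] [Module K V] [Module K W] [Finite V] [Finite W]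
    (h : Nat.card V = Nat.card W) : Nonempty (V ≃ₗ[K] W) := by
  rw [Module.natCard_eq_pow_finrank (K := K) (V := V),
    Module.natCard_eq_pow_finrank (K := K) (V := W)] at h
  exact FiniteDimensional.nonempty_linearEquiv_of_finrank_eq
    (Nat.pow_right_injective Finite.one_lt_card h)

theorem nonempty_addEquiv_of_prime_nsmul_eq_zero {V W : Type*} [AddCommGroup V] [AddCommGroup W]
    [Finite V] [Finite W] {p : ℕ} (hp : p.Prime) (hV : ∀ x : V, p • x = 0)
    (hW : ∀ y : W, p • y = 0) (hVW : Nat.card V = Nat.card W) : Nonempty (V ≃+ W) := by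
  have := Fact.mk hp
  let := AddCommGroup.zmodModule hV
  let := AddCommGroup.zmodModule hW
  exact (nonempty_linearEquiv_of_natCard_eq (ZMod p) hVW).map LinearEquiv.toAddEquiv

section CardDvdPrimeSq

variable {P Q : Type*} [Group P] [Group Q] {p : ℕ}

theorem isMulCommutative_of_card_dvd_prime_sq (hp : p.Prime) (hP : Nat.card P ∣ p ^ 2) :
    IsMulCommutative P := by
  have := Fact.mk hp
  obtain ⟨k, hk, hcard⟩ := (Nat.dvd_prime_pow hp).1 hP
  obtain rfl | hk := hk.eq_or_lt
  · exact IsPGroup.isMulCommutative_of_card_eq_prime_sq hcard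
  · have hdvd : Nat.card P ∣ p := by simpa [hcard] using pow_dvd_pow p (Nat.le_of_lt_succ hk)
    have := isCyclic_of_card_dvd_prime hdvd
    infer_instance

theorem isCyclic_of_card_dvd_prime_sq (hp : p.Prime) (hP : Nat.card P ∣ p ^ 2) {x : P}
    (hx : x ^ p ≠ 1) : IsCyclic P := by
  have := Fact.mk hp
  have : Finite P := Nat.finite_of_card_ne_zero (ne_zero_of_dvd_ne_zero (pow_pos hp.pos 2).ne' hP)
  have hx' : x ^ p ^ 2 = 1 := orderOf_dvd_iff_pow_eq_one.1 ((orderOf_dvd_natCard x).trans hP)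
  have horder : orderOf x = p ^ 2 := orderOf_eq_prime_pow (by simpa using hx) hx'
  exact isCyclic_of_orderOf_eq_card x
    (Nat.dvd_antisymm (orderOf_dvd_natCard x) (horder ▸ hP))

open scoped IsMulCommutative in
theorem nonempty_mulEquiv_of_pow_prime_eq_one [IsMulCommutative P] [IsMulCommutative Q] [Finite P]
    [Finite Q] (hp : p.Prime) (hP : ∀ x : P, x ^ p = 1) (hQ : ∀ y : Q, y ^ p = 1)
    (hPQ : Nat.card P = Nat.card Q) : Nonempty (P ≃* Q) :=
  (nonempty_addEquiv_of_prime_nsmul_eq_zero (V := Additive P) (W := Additive Q)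
    hp hP hQ hPQ).map MulEquiv.toAdditive.symm

theorem nonempty_mulEquiv_of_card_dvd_prime_sq (hp : p.Prime) (hP : Nat.card P ∣ p ^ 2)
    (hPQ : Nat.card P = Nat.card Q) (h : (∀ x : P, x ^ p = 1) ↔ ∀ y : Q, y ^ p = 1) :
    Nonempty (P ≃* Q) := by
  have hQ : Nat.card Q ∣ p ^ 2 := hPQ ▸ hP
  by_cases hexp : ∀ x : P, x ^ p = 1
  · have hne : Nat.card P ≠ 0 := ne_zero_of_dvd_ne_zero (pow_pos hp.pos 2).ne' hP
    have : Finite P := Nat.finite_of_card_ne_zero hne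
    have : Finite Q := Nat.finite_of_card_ne_zero (hPQ ▸ hne)
    have := isMulCommutative_of_card_dvd_prime_sq hp hP
    have := isMulCommutative_of_card_dvd_prime_sq hp hQ
    exact nonempty_mulEquiv_of_pow_prime_eq_one hp hexp (h.1 hexp) hPQ
  · obtain ⟨x, hx⟩ := not_forall.1 hexp
    obtain ⟨y, hy⟩ := not_forall.1 (h.not.1 hexp)
    have := isCyclic_of_card_dvd_prime_sq hp hP hx
    have := isCyclic_of_card_dvd_prime_sq hp hQ hy
    exact ⟨mulEquivOfCyclicCardEq hPQ⟩

end CardDvdPrimeSq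

section CrossedHom

theorem card_sylow_dvd_prime_sq {p : ℕ} [Fact p.Prime] [Finite G] (A : Sylow p G)
    (hG : ¬ p ^ 3 ∣ Nat.card G) : Nat.card A ∣ p ^ 2 := by
  obtain ⟨n, hn⟩ := A.2.exists_card_eq
  have hn3 : ¬ 3 ≤ n := fun h =>
    hG ((pow_dvd_pow p h).trans (hn ▸ (A : Subgroup G).card_subgroup_dvd_card))
  exact hn ▸ pow_dvd_pow p (by omega)

variable {H : Type*} [Group H] [MulDistribMulAction H G]

open scoped Pointwise in
theorem exists_sylow_smul_mem_of_isPGroup [Finite G] {p : ℕ} [Fact p.Prime]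
    (hH : IsPGroup p H) :
    ∃ A : Sylow p G, ∀ h : H, ∀ a ∈ (A : Subgroup G), h • a ∈ (A : Subgroup G) := by
  obtain ⟨A, hA⟩ := hH.nonempty_fixed_point_of_prime_not_dvd_card (Sylow p G)
    (not_dvd_card_sylow p G)
  refine ⟨A, fun h a ha => ?_⟩
  rw [← show h • (A : Subgroup G) = A from congrArg Sylow.toSubgroup (hA h)]
  exact Subgroup.smul_mem_pointwise_smul a h _ ha

/-- A crossed homomorphism (nonabelian 1-cocycle) from `H` to a group `G` on which `H` acts by
automorphisms. -/
def IsCrossedHom (c : H → G) : Prop := ∀ h k : H, c (h * k) = c h * h • c k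

/-- The action of a subgroup `Q` of `H` on a subgroup `A` of `G` which it preserves. -/
abbrev restrictAction (Q : Subgroup H) (A : Subgroup G) (hA : ∀ h ∈ Q, ∀ a ∈ A, h • a ∈ A) :
    MulDistribMulAction Q A where
  smul h a := ⟨(h : H) • (a : G), hA h h.2 a a.2⟩
  one_smul a := Subtype.ext (one_smul H (a : G))
  mul_smul h k a := Subtype.ext (mul_smul (h : H) (k : H) (a : G))
  smul_mul h a b := Subtype.ext (smul_mul' (h : H) (a : G) (b : G))
  smul_one h := Subtype.ext (smul_one (h : H))

namespace IsCrossedHom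

variable {p : ℕ} {c : H → G}

theorem map_one (hc : IsCrossedHom c) : c 1 = 1 := by
  simpa using hc 1 1

theorem ofMul_map_pow {A : Type*} [CommGroup A] [MulDistribMulAction H A] {c : H → A}
    (hc : IsCrossedHom c) (h : H) (n : ℕ) :
    Additive.ofMul (c (h ^ n)) =
      (∑ i ∈ Finset.range n, Representation.ofMulDistribMulAction H A h ^ i)
        (Additive.ofMul (c h)) := by
  induction n with
  | zero => simp [hc.map_one]
  | succ n ih =>
    rw [pow_succ, hc, ofMul_mul, ih, Finset.sum_range_succ, LinearMap.add_apply, ← map_pow]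
    rfl

theorem pow_prime_eq_one_iff {A : Type*} [CommGroup A] [MulDistribMulAction H A] {c : H → A}
    (hc : IsCrossedHom c) (hbij : Function.Bijective c) (hp : p.Prime) (hodd : Odd p)
    (hA : Nat.card A ∣ p ^ 2) (h : H) : h ^ p = 1 ↔ c h ^ p = 1 := by
  have hpow : h ^ p ^ 2 = 1 := by
    rw [← Nat.card_congr (Equiv.ofBijective c hbij)] at hA
    exact orderOf_dvd_iff_pow_eq_one.1 ((orderOf_dvd_natCard h).trans hA)
  have hσ : Representation.ofMulDistribMulAction H A h ^ p ^ 2 = 1 := by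
    rw [← map_pow, hpow, _root_.map_one]
  rw [← hbij.injective.eq_iff, hc.map_one, ← ofMul_eq_zero, hc.ofMul_map_pow,
    geom_sum_apply_eq_zero_iff (M := Additive A) hp hodd hA hσ, ← ofMul_pow, ofMul_eq_zero]

open scoped IsMulCommutative in
theorem nonempty_mulEquiv (hc : IsCrossedHom c) (hbij : Function.Bijective c) (hp : p.Prime)
    (hodd : Odd p) (hG : Nat.card G ∣ p ^ 2) : Nonempty (G ≃* H) := by
  have := isMulCommutative_of_card_dvd_prime_sq hp hG
  refine nonempty_mulEquiv_of_card_dvd_prime_sq hp hG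
    (Nat.card_congr (Equiv.ofBijective c hbij)).symm ?_
  rw [hbij.surjective.forall]
  exact forall_congr' fun h => (hc.pow_prime_eq_one_iff hbij hp hodd hG h).symm

theorem exists_inv_mul_mul_smul_mem (hc : IsCrossedHom c) (hH : IsPGroup p H) [Fact p.Prime]
    {A : Subgroup G} (hA : ∀ h : H, ∀ a ∈ A, h • a ∈ A) (hindex : ¬ p ∣ A.index) :
    ∃ x : G, ∀ h : H, x⁻¹ * (c h * h • x) ∈ A := by
  let : MulAction H (G ⧸ A) :=
    { smul h := Quotient.map' (fun x => c h * h • x) fun x y hxy => by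
        rw [QuotientGroup.leftRel_apply] at hxy ⊢
        simpa [mul_assoc, smul_mul', smul_inv'] using hA h _ hxy
      one_smul := by
        rintro ⟨x⟩
        exact congrArg (Quotient.mk _) (by simp [hc.map_one])
      mul_smul := by
        rintro h k ⟨x⟩
        exact congrArg (Quotient.mk _) (by simp [hc h k, mul_smul, mul_assoc]) }
  obtain ⟨⟨x⟩, hx⟩ := hH.nonempty_fixed_point_of_prime_not_dvd_card (G ⧸ A) hindex
  exact ⟨x, fun h => QuotientGroup.eq.1 (hx h).symm⟩

open scoped Pointwise in
theorem exists_sylow_mem_iff_map_mem [Finite G] [Fact p.Prime] (hc : IsCrossedHom c)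
    (hbij : Function.Bijective c) :
    ∃ (A : Sylow p G) (Q : Sylow p H),
      (∀ h ∈ Q, ∀ a ∈ A, h • a ∈ A) ∧ ∀ h, h ∈ Q ↔ c h ∈ A := by
  have : Finite H := Finite.of_injective c hbij.injective
  let P : Sylow p H := default
  obtain ⟨A, hA⟩ := exists_sylow_smul_mem_of_isPGroup (G := G) P.2
  obtain ⟨x, hx⟩ := exists_inv_mul_mul_smul_mem (H := P) (c := fun h => c h)
    (fun h k => hc h k) P.2 hA A.not_dvd_index
  obtain ⟨k, rfl⟩ := hbij.surjective x
  have hQ : ∀ h, h ∈ k⁻¹ • P ↔ k * h * k⁻¹ ∈ P := fun h => by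
    change h ∈ MulAut.conj k⁻¹ • (P : Subgroup H) ↔ _
    rw [map_inv, Subgroup.mem_inv_pointwise_smul_iff]
    rfl
  have hB : ∀ a, a ∈ k⁻¹ • A ↔ k • a ∈ A := fun a =>
    Subgroup.mem_inv_pointwise_smul_iff
  have hsub : ∀ h ∈ k⁻¹ • P, c h ∈ k⁻¹ • A := fun h hh => by
    have hck : k • c h = (c k)⁻¹ * (c (k * h * k⁻¹) * (k * h * k⁻¹) • c k) := by
      rw [eq_inv_mul_iff_mul_eq, ← hc, ← hc, inv_mul_cancel_right]
    rw [hB, hck]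
    exact hx ⟨_, (hQ h).1 hh⟩
  refine ⟨k⁻¹ • A, k⁻¹ • P, fun h hh a ha => ?_, fun h => ⟨hsub h, fun hh => ?_⟩⟩
  · rw [hB, show k • h • a = (k * h * k⁻¹) • k • a by simp only [smul_smul, inv_mul_cancel_right]]
    exact hA ⟨_, (hQ h).1 hh⟩ _ ((hB a).1 ha)
  · have hcard : Nat.card (k⁻¹ • P : Sylow p H) = Nat.card (k⁻¹ • A : Sylow p G) := by
      rw [Sylow.card_eq_multiplicity, Sylow.card_eq_multiplicity,
        Nat.card_congr (Equiv.ofBijective c hbij)]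
    have himage : c '' (k⁻¹ • P : Sylow p H) = (k⁻¹ • A : Sylow p G) :=
      Set.eq_of_subset_of_ncard_le (Set.image_subset_iff.2 hsub)
        (by rw [Set.ncard_image_of_injective _ hbij.injective]; exact hcard.ge)
    obtain ⟨g, hg, hgh⟩ := himage.ge hh
    exact hbij.injective hgh ▸ hg

theorem nonempty_sylow_mulEquiv [Finite G] (hc : IsCrossedHom c) (hbij : Function.Bijective c)
    (hp : p.Prime) (hodd : Odd p) (hG : ¬ p ^ 3 ∣ Nat.card G) (P : Sylow p G) (Q : Sylow p H) :
    Nonempty (P ≃* Q) := by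
  have := Fact.mk hp
  have : Finite H := Finite.of_injective c hbij.injective
  obtain ⟨A, B, hBA, hmem⟩ := hc.exists_sylow_mem_iff_map_mem (p := p) hbij
  let := restrictAction (B : Subgroup H) (A : Subgroup G) hBA
  have hcAB : IsCrossedHom fun h : B => (⟨c h, (hmem h).1 h.2⟩ : A) :=
    fun h k => Subtype.ext (hc h k)
  have hbijAB : Function.Bijective fun h : B => (⟨c h, (hmem h).1 h.2⟩ : A) :=
    ((Equiv.ofBijective c hbij).subtypeEquiv hmem).bijective
  obtain ⟨f⟩ := hcAB.nonempty_mulEquiv hbijAB hp hodd (card_sylow_dvd_prime_sq A hG)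
  exact ⟨(P.equiv A).trans (f.trans (B.equiv Q))⟩

end IsCrossedHom

end CrossedHom

/-- The group `(G, ∘)` of a gamma function: a type synonym of `G`, so that it can carry a second
group structure. -/
def CircGroup {γ : G → MulAut G} (_ : IsGammaFunction γ) : Type _ := G

namespace CircGroup

variable {γ : G → MulAut G} (hγ : IsGammaFunction γ)

/-- The identity map from `G` to `(G, ∘)`. -/
def of : G ≃ CircGroup hγ := Equiv.refl G

instance : Group (CircGroup hγ) :=
  let _ : Mul (CircGroup hγ) := ⟨fun g h => of hγ (circ γ ((of hγ).symm g) ((of hγ).symm h))⟩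
  let _ : Inv (CircGroup hγ) := ⟨fun g => of hγ ((γ ((of hγ).symm g)).symm ((of hγ).symm g)⁻¹)⟩
  let _ : One (CircGroup hγ) := ⟨of hγ 1⟩
  Group.ofLeftAxioms
    (fun (a b c : G) => by
      change γ c (γ b a * b) * c = γ (γ c b * c) a * (γ c b * c)
      rw [hγ, map_mul, mul_assoc, MulAut.mul_apply])
    (fun (a : G) => by
      change γ a 1 * a = a
      rw [map_one, one_mul])
    (fun (a : G) => by
      change γ a ((γ a).symm a⁻¹) * a = 1
      rw [MulEquiv.apply_symm_apply, inv_mul_cancel])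

theorem of_symm_mul (g h : CircGroup hγ) :
    (of hγ).symm (g * h) = γ ((of hγ).symm h) ((of hγ).symm g) * (of hγ).symm h := rfl

/-- The homomorphism `(G, ∘) → Aut G` given by the gamma function `γ`. As `γ` reverses products in
Mathlib's composition order, it is precomposed with inversion in `(G, ∘)`. -/
def toMulAut : CircGroup hγ →* MulAut G :=
  MonoidHom.mk' (fun h => γ ((of hγ).symm h⁻¹)) fun g h => by
    rw [mul_inv_rev, of_symm_mul, hγ]

instance : MulDistribMulAction (CircGroup hγ) G := .compHom G (toMulAut hγ)

theorem smul_eq (h : CircGroup hγ) (g : G) : h • g = γ ((of hγ).symm h⁻¹) g := rfl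

/-- The identity map from `(G, ∘)` to `G`, conjugated by the two inversions so that it becomes a
crossed homomorphism. -/
def cocycle : CircGroup hγ ≃ G :=
  (Equiv.inv _).trans ((of hγ).symm.trans (Equiv.inv G))

theorem isCrossedHom_cocycle : IsCrossedHom (cocycle hγ) := fun h k => by
  simp [cocycle, of_symm_mul, smul_eq]

/-- The isomorphism from `(G, ∘)` to a group `H` realising the circle operation through `e`. -/
def mulEquiv {H : Type*} [Group H] (e : G ≃ H) (he : ∀ g h, e (circ γ g h) = e g * e h) :
    CircGroup hγ ≃* H :=
  MulEquiv.mk' ((of hγ).symm.trans e) fun g h => he ((of hγ).symm g) ((of hγ).symm h)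

end CircGroup

theorem IsGammaFunction.exists_sylow_invariant {γ : G → MulAut G} (hγ : IsGammaFunction γ)
    [Finite G] (p : ℕ) [Fact p.Prime] :
    ∃ A : Sylow p G, ∀ a₁ ∈ (A : Subgroup G), ∀ a₂ ∈ (A : Subgroup G),
      γ a₂ a₁ ∈ (A : Subgroup G) := by
  have hc := CircGroup.isCrossedHom_cocycle hγ
  obtain ⟨A, Q, hQA, hmem⟩ := hc.exists_sylow_mem_iff_map_mem (p := p)
    (CircGroup.cocycle hγ).bijective
  refine ⟨A, fun a₁ h₁ a₂ h₂ => ?_⟩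
  have hQ : (CircGroup.of hγ a₂)⁻¹ ∈ Q := by
    simpa [hmem, CircGroup.cocycle] using show a₂ ∈ A from h₂
  have hsmul : (CircGroup.of hγ a₂)⁻¹ • a₁ = γ a₂ a₁ := by simp [CircGroup.smul_eq]
  exact hsmul ▸ hQA _ hQ a₁ h₁

theorem nonempty_sylow_mulEquiv_of_mulEquiv {H K : Type*} [Group H] [Group K] [Finite K] {p : ℕ}
    [Fact p.Prime] (f : H ≃* K) (P : Sylow p H) (Q : Sylow p K) : Nonempty (P ≃* Q) := by
  have : Finite H := Finite.of_equiv K f.symm.toEquiv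
  exact ⟨(f.subgroupMap P).trans ((P.mapSurjective (f := (f : H →* K)) f.surjective).equiv Q)⟩

theorem sylow_invariant_and_isomorphic_general {p : ℕ} (hp : p.Prime) {G : Type*} [Group G]
    [Finite G] (γ : G → MulAut G) (hγ : IsGammaFunction γ) :
    (∃ A : Sylow p G, ∀ a₁ ∈ (A : Subgroup G), ∀ a₂ ∈ (A : Subgroup G),
      γ a₂ a₁ ∈ (A : Subgroup G)) ∧
    (2 < p → ¬ p ^ 3 ∣ Nat.card G → ∀ (H : Type*) [Group H] (e : G ≃ H),
      (∀ g h : G, e (circ γ g h) = e g * e h) →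
      ∀ (P : Sylow p G) (Q : Sylow p H),
        Nonempty ((P : Subgroup G) ≃* (Q : Subgroup H))) := by
  have := Fact.mk hp
  refine ⟨hγ.exists_sylow_invariant p, fun hp2 hG H _ e he P Q => ?_⟩
  have : Finite H := Finite.of_equiv G e
  let R : Sylow p (CircGroup hγ) := default
  obtain ⟨f⟩ := (CircGroup.isCrossedHom_cocycle hγ).nonempty_sylow_mulEquiv
    (CircGroup.cocycle hγ).bijective hp (hp.odd_of_ne_two hp2.ne') hG P R
  obtain ⟨f'⟩ := nonempty_sylow_mulEquiv_of_mulEquiv (CircGroup.mulEquiv hγ e he) R Q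
  exact ⟨f.trans f'⟩

/-- Theorem `teo:sylow` of the paper.  For a group `G` of order `p²q`
and a gamma function `γ` on `G`, some Sylow `p`-subgroup `A` of `G` is `γ(A)`-invariant;
and if `p > 2`, the Sylow `p`-subgroups of `G` and of `(G, ∘)` are isomorphic.  (The group
`(G, ∘)` is rendered by quantifying over all groups `H` realising the circle operation.) -/
theorem sylow_invariant_and_isomorphic
    {p q : ℕ} (hp : p.Prime) (hq : q.Prime) (hpq : p ≠ q)
    {G : Type u} [Group G] [Finite G] (hG : Nat.card G = p ^ 2 * q)
    (γ : G → MulAut G) (hγ : IsGammaFunction γ) :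
    (∃ A : Sylow p G, ∀ a₁ ∈ (A : Subgroup G), ∀ a₂ ∈ (A : Subgroup G),
      γ a₂ a₁ ∈ (A : Subgroup G)) ∧
    (2 < p → ∀ (H : Type u) [Group H] (e : G ≃ H),
      (∀ g h : G, e (circ γ g h) = e g * e h) →
      ∀ (P : Sylow p G) (Q : Sylow p H),
        Nonempty ((P : Subgroup G) ≃* (Q : Subgroup H))) := by
  have hcard : ¬ p ^ 3 ∣ Nat.card G := by
    rwa [hG, pow_succ, Nat.mul_dvd_mul_iff_left (pow_pos hp.pos 2),
      Nat.prime_dvd_prime_iff_eq hp hq]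
  obtain ⟨hinv, hiso⟩ := sylow_invariant_and_isomorphic_general hp γ hγ
  exact ⟨hinv, fun hp2 => hiso hp2 hcard⟩

end HGS
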